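/- For every real x ≥ 2, the series ∑_{k=0}^{∞} binom(4k, 2k)·(1/(2k+1))·x^{−4k} converges and its sum equals (√2/4)·x·√(x² − √(x⁴ − 16)). In particular, taking x = 2, ∑_{k=0}^{∞} binom(4k, 2k)·(1/(2k+1))·16^{−k} = √2. -/

import Mathlib

/-!
Since `C(4k,2k)/(2k+1)` is the Catalan number of index `2k`, the series is the even part of the
Catalan generating function `F(y) = ∑ Cₙ yⁿ` at `y = x⁻²`, which lies in `(0, 1/4]`.

The partial sums of `∑ Cₙ/4ⁿ` telescope to `2 - 2·C(2N,N)/4^N` (`sum_catalan_div_four_pow`), so `F`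
converges absolutely on the closed disc `|y| ≤ 1/4`, boundary included, with `|F(y)| ≤ 2`.
The Catalan recurrence gives `F = 1 + y F²` (`catalanGF_eq`), i.e. `(1 - 2yF)² = 1 - 4y`.
The bound `|F| ≤ 2` forces `1 - 2yF ≥ 0`, which selects the branch `1 - 2yF(y) = √(1 - 4y)`
(`one_sub_catalanGF`).
Hence the even part `(F(y) + F(-y))/2` is `(√(1+4y) - √(1-4y))/(4y)`, and squaring shows that this
is the stated nested radical.
-/

open Real

/-- The Catalan generating function `∑ Cₙ yⁿ` on the reals, meaningful for `|y| ≤ 1/4`. -/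
noncomputable def catalanGF (y : ℝ) : ℝ := ∑' n : ℕ, (catalan n : ℝ) * y ^ n

theorem sum_catalan_div_four_pow (N : ℕ) :
    ∑ n ∈ Finset.range N, (catalan n : ℝ) * (1 / 4) ^ n
      = 2 - 2 * (Nat.centralBinom N : ℝ) * (1 / 4) ^ N := by
  induction N with
  | zero => simp
  | succ N ih =>
    rw [Finset.sum_range_succ, ih, pow_succ]
    have h1 : ((N : ℝ) + 1) * catalan N = Nat.centralBinom N := by
      exact_mod_cast succ_mul_catalan_eq_centralBinom N
    have h2 : ((N : ℝ) + 1) * Nat.centralBinom (N + 1)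
        = 2 * (2 * N + 1) * Nat.centralBinom N := by
      exact_mod_cast Nat.succ_mul_centralBinom_succ N
    have h3 : (Nat.centralBinom (N + 1) : ℝ) = 2 * (2 * N + 1) * catalan N := by
      have : (N : ℝ) + 1 ≠ 0 := by positivity
      apply mul_left_cancel₀ this
      rw [h2, ← h1]; ring
    rw [h3, ← h1]; ring

theorem sum_catalan_le_two (N : ℕ) :
    ∑ n ∈ Finset.range N, (catalan n : ℝ) * (1 / 4) ^ n ≤ 2 := by
  rw [sum_catalan_div_four_pow]
  have : 0 ≤ 2 * (Nat.centralBinom N : ℝ) * (1 / 4) ^ N := by positivity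
  linarith

theorem summable_catalan_quarter : Summable fun n : ℕ => (catalan n : ℝ) * (1 / 4) ^ n :=
  summable_of_sum_range_le (fun n => by positivity) sum_catalan_le_two

theorem norm_catalan_term_le {y : ℝ} (hy : |y| ≤ 1 / 4) (n : ℕ) :
    ‖(catalan n : ℝ) * y ^ n‖ ≤ (catalan n : ℝ) * (1 / 4) ^ n := by
  rw [Real.norm_eq_abs, abs_mul, abs_pow, Nat.abs_cast]
  gcongr

theorem summable_norm_catalan {y : ℝ} (hy : |y| ≤ 1 / 4) :
    Summable fun n : ℕ => ‖(catalan n : ℝ) * y ^ n‖ :=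
  Summable.of_nonneg_of_le (fun _ => norm_nonneg _) (norm_catalan_term_le hy)
    summable_catalan_quarter

theorem abs_catalanGF_le {y : ℝ} (hy : |y| ≤ 1 / 4) : |catalanGF y| ≤ 2 :=
  (tsum_of_norm_bounded summable_catalan_quarter.hasSum (norm_catalan_term_le hy)).trans
    (Real.tsum_le_of_sum_range_le (fun n => by positivity) sum_catalan_le_two)

/-- The Catalan recurrence, read off the Cauchy product of the series with itself. -/
theorem catalanGF_eq {y : ℝ} (hy : |y| ≤ 1 / 4) :
    catalanGF y = 1 + y * catalanGF y ^ 2 := by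
  have hs := summable_norm_catalan hy
  have hsq : catalanGF y ^ 2 = ∑' n : ℕ, (catalan (n + 1) : ℝ) * y ^ n := by
    rw [sq, catalanGF, tsum_mul_tsum_eq_tsum_sum_antidiagonal_of_summable_norm hs hs]
    refine tsum_congr fun n => ?_
    rw [catalan_succ', Nat.cast_sum, Finset.sum_mul]
    refine Finset.sum_congr rfl fun p hp => ?_
    rw [← Finset.HasAntidiagonal.mem_antidiagonal.mp hp, pow_add]
    push_cast; ring
  rw [hsq, catalanGF, hs.of_norm.tsum_eq_zero_add, ← tsum_mul_left]
  simp only [catalan_zero, Nat.cast_one, pow_zero, mul_one]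
  congr 1
  exact tsum_congr fun n => by ring

theorem one_sub_catalanGF {y : ℝ} (hy : |y| ≤ 1 / 4) :
    1 - 2 * y * catalanGF y = √(1 - 4 * y) := by
  have hle : y * catalanGF y ≤ 1 / 2 := by
    calc y * catalanGF y ≤ |y| * |catalanGF y| := by rw [← abs_mul]; exact le_abs_self _
      _ ≤ 1 / 4 * 2 := by gcongr; exact abs_catalanGF_le hy
      _ = 1 / 2 := by norm_num
  rw [show 1 - 4 * y = (1 - 2 * y * catalanGF y) ^ 2 by
    linear_combination 4 * y * catalanGF_eq hy]
  exact (Real.sqrt_sq (by linarith)).symm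

theorem hasSum_even_catalan {y : ℝ} (hy : |y| ≤ 1 / 4) :
    HasSum (fun k : ℕ => (catalan (2 * k) : ℝ) * y ^ (2 * k))
      ((catalanGF y + catalanGF (-y)) / 2) := by
  have h1 := (summable_norm_catalan hy).of_norm.hasSum
  have h2 := (summable_norm_catalan (y := -y) (by rwa [abs_neg])).of_norm.hasSum
  have h := (h1.add h2).div_const 2
  have hinj : Function.Injective fun k : ℕ => 2 * k := fun a b hab => by
    simpa using hab
  rw [← hinj.hasSum_iff] at h
  · refine (congrArg (HasSum · _) (funext fun k => ?_)).mpr h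
    simp only [Function.comp, (even_two_mul k).neg_pow]
    ring
  · intro n hn
    have hodd : Odd n := by
      rw [← Nat.not_even_iff_odd]
      rintro ⟨m, rfl⟩
      exact hn ⟨m, by simp only; ring⟩
    simp only [hodd.neg_pow]
    ring

theorem hasSum_choose_nested_radical (x : ℝ) (hx : 2 ≤ x) :
    HasSum (fun k : ℕ => (Nat.choose (4 * k) (2 * k) : ℝ) *
        (1 / (2 * (k : ℝ) + 1)) * (1 / x ^ (4 * k)))
      (√2 / 4 * x * √(x ^ 2 - √(x ^ 4 - 16))) := by
  have hx0 : 0 < x := by linarith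
  have hx2 : 4 ≤ x ^ 2 := by nlinarith
  have hy : |1 / x ^ 2| ≤ 1 / 4 := by
    rw [abs_of_pos (by positivity)]
    exact one_div_le_one_div_of_le (by norm_num) hx2
  have hA := one_sub_catalanGF hy
  have hB := one_sub_catalanGF (y := -(1 / x ^ 2)) (by rwa [abs_neg])
  have e1 : √(1 - 4 * (1 / x ^ 2)) = √(x ^ 2 - 4) / x := by
    rw [show 1 - 4 * (1 / x ^ 2) = (x ^ 2 - 4) / x ^ 2 by field_simp,
      Real.sqrt_div (by linarith), Real.sqrt_sq hx0.le]
  have e2 : √(1 - 4 * -(1 / x ^ 2)) = √(x ^ 2 + 4) / x := by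
    rw [show 1 - 4 * -(1 / x ^ 2) = (x ^ 2 + 4) / x ^ 2 by field_simp; ring,
      Real.sqrt_div (by linarith), Real.sqrt_sq hx0.le]
  rw [e1] at hA
  rw [e2] at hB
  -- Denesting: `√2 · √(a - √(a² - 16)) = √(a + 4) - √(a - 4)` with `a = x²`.
  have hnest : √2 * √(x ^ 2 - √(x ^ 4 - 16)) = √(x ^ 2 + 4) - √(x ^ 2 - 4) := by
    have hprod : √(x ^ 4 - 16) = √(x ^ 2 + 4) * √(x ^ 2 - 4) := by
      rw [← Real.sqrt_mul (by linarith)]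
      congr 1; ring
    rw [← Real.sqrt_mul (by norm_num), hprod]
    have hp := Real.sq_sqrt (show 0 ≤ x ^ 2 + 4 by linarith)
    have hm := Real.sq_sqrt (show 0 ≤ x ^ 2 - 4 by linarith)
    have hmono : √(x ^ 2 - 4) ≤ √(x ^ 2 + 4) := Real.sqrt_le_sqrt (by linarith)
    rw [show 2 * (x ^ 2 - √(x ^ 2 + 4) * √(x ^ 2 - 4))
      = (√(x ^ 2 + 4) - √(x ^ 2 - 4)) ^ 2 by linear_combination -hp - hm]
    exact Real.sqrt_sq (by linarith)
  have hval : √2 / 4 * x * √(x ^ 2 - √(x ^ 4 - 16))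
      = (catalanGF (1 / x ^ 2) + catalanGF (-(1 / x ^ 2))) / 2 := by
    have h1 : √2 / 4 * x * √(x ^ 2 - √(x ^ 4 - 16))
        = x / 4 * (√(x ^ 2 + 4) - √(x ^ 2 - 4)) := by rw [← hnest]; ring
    rw [h1]
    field_simp at hA hB
    linear_combination (hA - hB) / 4
  rw [hval]
  convert hasSum_even_catalan hy using 2 with k
  have hc : ((2 * k : ℝ) + 1) * catalan (2 * k) = Nat.choose (4 * k) (2 * k) := by
    have := succ_mul_catalan_eq_centralBinom (2 * k)
    rw [Nat.centralBinom_eq_two_mul_choose, show 2 * (2 * k) = 4 * k by ring] at this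
    exact_mod_cast this
  rw [← hc, div_pow, one_pow, ← pow_mul, show 2 * (2 * k) = 4 * k by ring]
  have : (2 * k : ℝ) + 1 ≠ 0 := by positivity
  field_simp

/-- For `x ≥ 2`, `∑_{k=0}^{∞} C(4k,2k)·(1/(2k+1))·x^{−4k} = (√2/4)·x·√(x² − √(x⁴ − 16))`;
in particular, for `x = 2`, the sum equals `√2`. -/
theorem stmt_13 (x : ℝ) (hx : 2 ≤ x) :
    HasSum (fun k : ℕ => (Nat.choose (4 * k) (2 * k) : ℝ) *
        (1 / (2 * (k : ℝ) + 1)) * (1 / x ^ (4 * k)))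
      (Real.sqrt 2 / 4 * x * Real.sqrt (x ^ 2 - Real.sqrt (x ^ 4 - 16))) ∧
    HasSum (fun k : ℕ => (Nat.choose (4 * k) (2 * k) : ℝ) *
        (1 / (2 * (k : ℝ) + 1)) * (1 / 16 ^ k))
      (Real.sqrt 2) := by
  refine ⟨hasSum_choose_nested_radical x hx, ?_⟩
  have h := hasSum_choose_nested_radical 2 le_rfl
  have hv : √2 / 4 * 2 * √((2 : ℝ) ^ 2 - √(2 ^ 4 - 16)) = √2 := by
    rw [show (2 : ℝ) ^ 4 - 16 = 0 by norm_num, Real.sqrt_zero, sub_zero,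
      Real.sqrt_sq (by norm_num)]
    ring
  rw [hv] at h
  convert h using 4 with k
  rw [pow_mul]; norm_num
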